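/- Let E be a complex Banach space and A, B bounded linear operators on E. Then the following are equivalent: (i) for every bounded linear operator C on E there exists a unique bounded linear operator X on E such that A∘X + X∘B + C = 0; (ii) the spectra of A and −B are disjoint, i.e. σ(A) ∩ σ(−B) = ∅. -/

import Mathlib

/-!
Let `S X = A X - X B`; the equation `A X + X B' + C = 0` reads `S X = -C` for `B = -B'`.

If `σ(A)` and `σ(B)` are disjoint, then `S` is invertible, since left multiplication by `A`
commutes with right multiplication by `B` and Gelfand theory gives `σ(S) ⊆ σ(A) - σ(B)`.

Conversely, suppose that `S` is invertible, so that `S` and its adjoint are bounded below.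
Testing `S` on rank-one operators shows that `A` or the adjoint of `B` is bounded below; testing
the adjoint of `S` on the functionals `X ↦ f (X x)` shows that the adjoint of `A`, or `B`, is
bounded below. As `-S` is the operator attached to `z - A` and `z - B`, the same dichotomies
hold for this pair, for every `z`. If `σ(A) ∩ σ(B)` is nonempty, take `z` in its frontier, hence
in the frontier of `σ(A)` or of `σ(B)`. Say of `σ(A)`: then `z - A` is a non-invertible limit of
invertible operators, so neither it nor its adjoint is bounded below. Therefore `z - B` and its
adjoint both are, which makes `z - B` invertible, a contradiction.
-/

open Set
open scoped Pointwise

section CommutingElements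

lemma isUnit_coe_centralizer_iff {R A : Type*} [CommSemiring R] [Semiring A] [Algebra R A]
    {s : Set A} {x : Subalgebra.centralizer R s} : IsUnit (x : A) ↔ IsUnit x := by
  refine ⟨fun ⟨u, hu⟩ ↦ ?_, fun hx ↦ hx.map (Subalgebra.centralizer R s).val⟩
  have hinv : (↑u⁻¹ : A) ∈ Subalgebra.centralizer R s := fun y hy ↦
    have hcomm : Commute y (u : A) := hu ▸ x.2 y hy
    hcomm.units_inv_right
  exact ⟨⟨x, ⟨_, hinv⟩, Subtype.ext (by simp [← hu]), Subtype.ext (by simp [← hu])⟩, rfl⟩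

lemma spectrum_coe_centralizer {R A : Type*} [CommRing R] [Ring A] [Algebra R A]
    {s : Set A} (x : Subalgebra.centralizer R s) : spectrum R (x : A) = spectrum R x := by
  ext z
  rw [spectrum.mem_iff, spectrum.mem_iff, ← isUnit_coe_centralizer_iff]
  rfl

lemma spectrum_sub_subset {A : Type*} [NormedCommRing A] [NormedAlgebra ℂ A] [CompleteSpace A]
    (a b : A) : spectrum ℂ (a - b) ⊆ spectrum ℂ a - spectrum ℂ b := by
  intro z hz
  obtain ⟨φ, rfl⟩ := WeakDual.CharacterSpace.mem_spectrum_iff_exists.1 hz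
  rw [map_sub]
  exact sub_mem_sub (AlgHom.apply_mem_spectrum φ a) (AlgHom.apply_mem_spectrum φ b)

-- The double centralizer of `{a, b}` is a commutative Banach algebra with the same spectra.
lemma spectrum_sub_subset_of_commute {A : Type*} [NormedRing A] [NormedAlgebra ℂ A]
    [CompleteSpace A] {a b : A} (hab : Commute a b) :
    spectrum ℂ (a - b) ⊆ spectrum ℂ a - spectrum ℂ b := by
  let S : Subalgebra ℂ A := Subalgebra.centralizer ℂ (centralizer {a, b})
  have hcomm : ∀ x ∈ ({a, b} : Set A), ∀ y ∈ ({a, b} : Set A), x * y = y * x := by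
    simp [hab.eq]
  let : NormedCommRing S :=
    { (inferInstance : NormedRing S) with
      mul_comm := fun x y ↦
        Subtype.ext (centralizer_centralizer_comm_of_comm hcomm x x.2 y y.2) }
  let : NormedAlgebra ℂ S := Subalgebra.toNormedAlgebra S
  have : CompleteSpace S := (isClosed_centralizer _).completeSpace_coe
  let a' : S := ⟨a, subset_centralizer_centralizer (by simp)⟩
  let b' : S := ⟨b, subset_centralizer_centralizer (by simp)⟩
  calc spectrum ℂ (a - b) = spectrum ℂ (a' - b') := spectrum_coe_centralizer (a' - b')
    _ ⊆ spectrum ℂ a' - spectrum ℂ b' := spectrum_sub_subset a' b'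
    _ = spectrum ℂ a - spectrum ℂ b :=
      congrArg₂ (· - ·) (spectrum_coe_centralizer a').symm (spectrum_coe_centralizer b').symm

end CommutingElements

lemma algebraMap_sub_mem_closure_isUnit_of_mem_frontier_spectrum {𝕜 A : Type*}
    [NormedField 𝕜] [NormedRing A] [NormedAlgebra 𝕜 A] {a : A} {z : 𝕜}
    (hz : z ∈ frontier (spectrum 𝕜 a)) : algebraMap 𝕜 A z - a ∈ closure {b : A | IsUnit b} := by
  rw [frontier_eq_closure_inter_closure] at hz
  exact map_mem_closure (f := fun w ↦ algebraMap 𝕜 A w - a)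
    ((continuous_algebraMap 𝕜 A).sub continuous_const) hz.2 fun _ ↦ spectrum.notMem_iff.1

section NontriviallyNormedField

variable {𝕜 E F : Type*} [NontriviallyNormedField 𝕜] [NormedAddCommGroup E] [NormedSpace 𝕜 E]
  [NormedAddCommGroup F] [NormedSpace 𝕜 F]

section Composition

variable (F) in
/-- The operator `X ↦ A ∘ X` of left composition on `F →L[𝕜] E`. -/
noncomputable abbrev leftComp (A : E →L[𝕜] E) : (F →L[𝕜] E) →L[𝕜] (F →L[𝕜] E) :=
  ContinuousLinearMap.compL 𝕜 F E E A

variable (F) in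
/-- The operator `X ↦ X ∘ B` of right composition on `E →L[𝕜] F`. For `F = 𝕜` this is the
Banach space adjoint of `B`. -/
noncomputable abbrev rightComp (B : E →L[𝕜] E) : (E →L[𝕜] F) →L[𝕜] (E →L[𝕜] F) :=
  (ContinuousLinearMap.compL 𝕜 E E F).flip B

lemma isUnit_leftComp {A : E →L[𝕜] E} (hA : IsUnit A) : IsUnit (leftComp F A) := by
  obtain ⟨u, rfl⟩ := hA
  refine ⟨⟨_, leftComp F (↑u⁻¹ : E →L[𝕜] E), ?_, ?_⟩, rfl⟩ <;> ext X x
  · exact DFunLike.congr_fun u.mul_inv (X x)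
  · exact DFunLike.congr_fun u.inv_mul (X x)

lemma isUnit_rightComp {B : E →L[𝕜] E} (hB : IsUnit B) : IsUnit (rightComp F B) := by
  obtain ⟨u, rfl⟩ := hB
  refine ⟨⟨_, rightComp F (↑u⁻¹ : E →L[𝕜] E), ?_, ?_⟩, rfl⟩ <;> ext X x
  · exact congrArg X (DFunLike.congr_fun u.inv_mul x)
  · exact congrArg X (DFunLike.congr_fun u.mul_inv x)

lemma commute_leftComp_rightComp (A : E →L[𝕜] E) (B : F →L[𝕜] F) :
    Commute (leftComp F A) (rightComp E B) :=
  rfl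

lemma spectrum_leftComp_subset (A : E →L[𝕜] E) :
    spectrum 𝕜 (leftComp F A) ⊆ spectrum 𝕜 A := fun z hz hu ↦ hz <| by
  have hshift : algebraMap 𝕜 _ z - leftComp F A = leftComp F (algebraMap 𝕜 _ z - A) := by
    ext X x
    simp [Algebra.algebraMap_eq_smul_one]
  rw [spectrum.mem_resolventSet_iff, hshift]
  exact isUnit_leftComp hu

lemma spectrum_rightComp_subset (B : E →L[𝕜] E) :
    spectrum 𝕜 (rightComp F B) ⊆ spectrum 𝕜 B := fun z hz hu ↦ hz <| by
  have hshift : algebraMap 𝕜 _ z - rightComp F B = rightComp F (algebraMap 𝕜 _ z - B) := by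
    ext X x
    simp [Algebra.algebraMap_eq_smul_one]
  rw [spectrum.mem_resolventSet_iff, hshift]
  exact isUnit_rightComp hu

lemma rightComp_mem_closure_isUnit {T : E →L[𝕜] E} (hT : T ∈ closure {S : E →L[𝕜] E | IsUnit S}) :
    rightComp F T ∈ closure {S : (E →L[𝕜] F) →L[𝕜] (E →L[𝕜] F) | IsUnit S} :=
  map_mem_closure (ContinuousLinearMap.compL 𝕜 E E F).flip.continuous hT
    fun _ hS ↦ isUnit_rightComp hS

end Composition

section BoundedBelow

/-- An operator is bounded below if it expands norms by at least a positive factor; equivalently,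
if it is antilipschitz. -/
def BoundedBelow (T : E →L[𝕜] F) : Prop :=
  ∃ c > 0, ∀ x, c * ‖x‖ ≤ ‖T x‖

lemma boundedBelow_of_norm_le_mul {T : E →L[𝕜] F} {K : ℝ} (hT : ∀ x, ‖x‖ ≤ K * ‖T x‖) :
    BoundedBelow T := by
  refine ⟨(|K| + 1)⁻¹, by positivity, fun x ↦ ?_⟩
  rw [inv_mul_le_iff₀ (by positivity)]
  refine (hT x).trans ?_
  gcongr
  linarith [le_abs_self K]

lemma boundedBelow_of_isUnit {T : E →L[𝕜] E} (hT : IsUnit T) : BoundedBelow T := by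
  obtain ⟨u, rfl⟩ := hT
  refine boundedBelow_of_norm_le_mul (K := ‖(↑u⁻¹ : E →L[𝕜] E)‖) fun x ↦ ?_
  have hx : (↑u⁻¹ : E →L[𝕜] E) ((u : E →L[𝕜] E) x) = x := DFunLike.congr_fun u.inv_mul x
  simpa only [hx] using (↑u⁻¹ : E →L[𝕜] E).le_opNorm ((u : E →L[𝕜] E) x)

namespace BoundedBelow

lemma exists_antilipschitzWith {T : E →L[𝕜] F} (hT : BoundedBelow T) :
    ∃ K, AntilipschitzWith K T := by
  obtain ⟨c, hc, hT⟩ := hT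
  exact ⟨⟨c⁻¹, by positivity⟩,
    T.antilipschitz_of_bound fun x ↦ (le_inv_mul_iff₀ hc).2 (hT x)⟩

lemma injective {T : E →L[𝕜] F} (hT : BoundedBelow T) : Function.Injective T :=
  hT.exists_antilipschitzWith.choose_spec.injective

-- An invertible operator close to `T` is bounded below by nearly the same constant, which bounds
-- its inverse and so keeps `T` within the radius of invertibility.
lemma isUnit_of_mem_closure [CompleteSpace E] {T : E →L[𝕜] E} (hT : BoundedBelow T)
    (hcl : T ∈ closure {S : E →L[𝕜] E | IsUnit S}) : IsUnit T := by
  nontriviality E →L[𝕜] E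
  obtain ⟨c, hc, hbound⟩ := hT
  obtain ⟨_, ⟨u, rfl⟩, hu⟩ := Metric.mem_closure_iff.1 hcl (c / 2) (by positivity)
  rw [dist_eq_norm] at hu
  have hinv : ‖(↑u⁻¹ : E →L[𝕜] E)‖ ≤ (c / 2)⁻¹ := by
    refine ContinuousLinearMap.opNorm_le_bound _ (by positivity) fun y ↦ ?_
    rw [le_inv_mul_iff₀ (by positivity)]
    set x := (↑u⁻¹ : E →L[𝕜] E) y
    have hux : (u : E →L[𝕜] E) x = y := DFunLike.congr_fun u.mul_inv y
    have hdist : ‖T x - y‖ ≤ c / 2 * ‖x‖ := by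
      simpa [hux] using (T - u).le_of_opNorm_le hu.le x
    linarith [hbound x, norm_le_norm_add_norm_sub' (T x) y]
  have hradius : c / 2 ≤ ‖(↑u⁻¹ : E →L[𝕜] E)‖⁻¹ :=
    (le_inv_comm₀ (by positivity) (Units.norm_pos _)).2 hinv
  exact (u.ofNearby T (hu.trans_le hradius)).isUnit

end BoundedBelow

lemma boundedBelow_or_of_norm_eq_mul {U V W : Type*} [NormedAddCommGroup U] [NormedSpace 𝕜 U]
    [NormedAddCommGroup V] [NormedSpace 𝕜 V] [NormedAddCommGroup W] [NormedSpace 𝕜 W]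
    {P : U →L[𝕜] U} {Q : V →L[𝕜] V} {S : W →L[𝕜] W} (t : U → V → W)
    (norm_t : ∀ u v, ‖t u v‖ = ‖u‖ * ‖v‖) (S_t : ∀ u v, S (t u v) = t (P u) v - t u (Q v))
    (hS : BoundedBelow S) : BoundedBelow P ∨ BoundedBelow Q := by
  obtain ⟨c, hc, hS⟩ := hS
  refine or_iff_not_imp_left.2 fun hP ↦ ⟨c / 2, by positivity, fun v ↦ ?_⟩
  obtain ⟨u, hu⟩ : ∃ u, ‖P u‖ < c / 2 * ‖u‖ := by
    by_contra! h
    exact hP ⟨c / 2, by positivity, h⟩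
  have hu_pos : 0 < ‖u‖ := pos_of_mul_pos_right ((norm_nonneg _).trans_lt hu) (by positivity)
  have hPv : ‖P u‖ * ‖v‖ ≤ c / 2 * ‖u‖ * ‖v‖ := by gcongr
  have hPQ : c * (‖u‖ * ‖v‖) ≤ ‖P u‖ * ‖v‖ + ‖u‖ * ‖Q v‖ :=
    calc c * (‖u‖ * ‖v‖) ≤ ‖S (t u v)‖ := norm_t u v ▸ hS (t u v)
      _ ≤ ‖t (P u) v‖ + ‖t u (Q v)‖ := S_t u v ▸ norm_sub_le _ _
      _ = ‖P u‖ * ‖v‖ + ‖u‖ * ‖Q v‖ := by rw [norm_t, norm_t]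
  refine le_of_mul_le_mul_left ?_ hu_pos
  linarith

end BoundedBelow

section Sylvester

/-- The Sylvester operator `X ↦ A ∘ X - X ∘ B`. With the minus sign its spectrum is governed by
differences, and the equation `A ∘ X + X ∘ B + C = 0` involves `sylvester A (-B)`. -/
noncomputable def sylvester (A : E →L[𝕜] E) (B : F →L[𝕜] F) :
    (F →L[𝕜] E) →L[𝕜] (F →L[𝕜] E) :=
  leftComp F A - rightComp E B

@[simp]
lemma sylvester_apply (A : E →L[𝕜] E) (B : F →L[𝕜] F) (X : F →L[𝕜] E) :
    sylvester A B X = A.comp X - X.comp B :=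
  rfl

lemma sylvester_algebraMap_sub (A : E →L[𝕜] E) (B : F →L[𝕜] F) (z : 𝕜) :
    sylvester (algebraMap 𝕜 _ z - A) (algebraMap 𝕜 _ z - B) = -sylvester A B := by
  ext X x
  simp [Algebra.algebraMap_eq_smul_one]

lemma forall_existsUnique_comp_add_iff_bijective_sylvester (A : E →L[𝕜] E) (B : F →L[𝕜] F) :
    (∀ C : F →L[𝕜] E, ∃! X : F →L[𝕜] E, A.comp X + X.comp B + C = 0) ↔
      Function.Bijective (sylvester A (-B)) := by
  rw [Function.bijective_iff_existsUnique, ← (Equiv.neg (F →L[𝕜] E)).forall_congr_right]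
  refine forall_congr' fun C ↦ existsUnique_congr fun X ↦ ?_
  rw [Equiv.neg_apply, sylvester_apply, ContinuousLinearMap.comp_neg, sub_neg_eq_add,
    ← sub_eq_add_neg, sub_eq_zero]

lemma boundedBelow_or_of_sylvester {A : E →L[𝕜] E} {B : F →L[𝕜] F}
    (h : BoundedBelow (sylvester A B)) : BoundedBelow A ∨ BoundedBelow (rightComp 𝕜 B) :=
  boundedBelow_or_of_norm_eq_mul (fun x (f : StrongDual 𝕜 F) ↦ f.smulRight x)
    (fun x f ↦ by rw [ContinuousLinearMap.norm_smulRight_apply, mul_comm])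
    (fun x f ↦ by ext y; simp) h

end Sylvester

end NontriviallyNormedField

section Duality

variable {𝕜 E F : Type*} [RCLike 𝕜] [NormedAddCommGroup E] [NormedSpace 𝕜 E]
  [NormedAddCommGroup F] [NormedSpace 𝕜 F]

lemma topologicalClosure_range_eq_top_of_injective_rightComp {T : E →L[𝕜] E}
    (hT : Function.Injective (rightComp 𝕜 T)) : T.range.topologicalClosure = ⊤ := by
  by_contra hne
  set p := T.range.topologicalClosure
  have : IsClosed (p : Set E) := Submodule.isClosed_topologicalClosure _
  obtain ⟨y, -, hy⟩ := SetLike.exists_of_lt (lt_top_iff_ne_top.2 hne)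
  obtain ⟨g, hg⟩ := SeparatingDual.exists_ne_zero (R := 𝕜)
    (mt (Submodule.Quotient.mk_eq_zero p).1 hy)
  have hgT : rightComp 𝕜 T (g.comp p.mkQL) = rightComp 𝕜 T 0 := by
    ext x
    have hx : p.mkQ (T x) = 0 :=
      (Submodule.Quotient.mk_eq_zero p).2 (Submodule.le_topologicalClosure _ ⟨x, rfl⟩)
    exact (congrArg g hx).trans (map_zero g)
  exact hg (DFunLike.congr_fun (hT hgT) y)

lemma boundedBelow_of_isUnit_rightComp {T : E →L[𝕜] E} (hT : IsUnit (rightComp 𝕜 T)) :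
    BoundedBelow T := by
  obtain ⟨u, hu⟩ := hT
  set V : StrongDual 𝕜 E →L[𝕜] StrongDual 𝕜 E := ↑u⁻¹
  refine boundedBelow_of_norm_le_mul (K := ‖V‖) fun x ↦ ?_
  obtain ⟨g, hg, hgx⟩ := exists_dual_vector'' 𝕜 x
  have hVg : (V g).comp T = g := by
    have hmul : rightComp 𝕜 T * V = 1 := hu ▸ u.mul_inv
    exact DFunLike.congr_fun hmul g
  calc ‖x‖ = ‖V g (T x)‖ := by
        rw [← ContinuousLinearMap.comp_apply, hVg, hgx, RCLike.norm_ofReal, abs_norm]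
    _ ≤ ‖V g‖ * ‖T x‖ := (V g).le_opNorm _
    _ ≤ ‖V‖ * ‖T x‖ := by
      gcongr
      exact V.unit_le_opNorm g hg

lemma norm_comp_apply (f : StrongDual 𝕜 E) (x : F) :
    ‖f.comp (ContinuousLinearMap.apply 𝕜 E x)‖ = ‖f‖ * ‖x‖ := by
  set Φ := f.comp (ContinuousLinearMap.apply 𝕜 E x)
  refine le_antisymm (ContinuousLinearMap.opNorm_le_bound _ (by positivity) fun X ↦ ?_) ?_
  · calc ‖f (X x)‖ ≤ ‖f‖ * (‖X‖ * ‖x‖) := f.le_opNorm_of_le (X.le_opNorm x)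
      _ = ‖f‖ * ‖x‖ * ‖X‖ := by ring
  · obtain ⟨g, hg, hgx⟩ := exists_dual_vector'' 𝕜 x
    have hΦ : ‖(‖x‖ : 𝕜) • f‖ ≤ ‖Φ‖ := by
      refine ContinuousLinearMap.opNorm_le_bound _ (by positivity) fun y ↦ ?_
      calc ‖(‖x‖ : 𝕜) • f y‖ = ‖Φ (g.smulRight y)‖ := by simp [Φ, hgx]
        _ ≤ ‖Φ‖ * ‖g.smulRight y‖ := Φ.le_opNorm _
        _ ≤ ‖Φ‖ * ‖y‖ := by
          rw [ContinuousLinearMap.norm_smulRight_apply]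
          gcongr
          exact mul_le_of_le_one_left (norm_nonneg y) hg
    simpa [norm_smul, mul_comm] using hΦ

lemma boundedBelow_or_of_rightComp_sylvester {A : E →L[𝕜] E} {B : F →L[𝕜] F}
    (h : BoundedBelow (rightComp 𝕜 (sylvester A B))) :
    BoundedBelow (rightComp 𝕜 A) ∨ BoundedBelow B :=
  boundedBelow_or_of_norm_eq_mul
    (fun (f : StrongDual 𝕜 E) x ↦ f.comp (ContinuousLinearMap.apply 𝕜 E x))
    norm_comp_apply (fun f x ↦ by ext X; simp) h

variable [CompleteSpace E]

lemma isUnit_iff_boundedBelow_and_boundedBelow_rightComp {T : E →L[𝕜] E} :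
    IsUnit T ↔ BoundedBelow T ∧ BoundedBelow (rightComp 𝕜 T) := by
  refine ⟨fun h ↦ ⟨boundedBelow_of_isUnit h, boundedBelow_of_isUnit (isUnit_rightComp h)⟩,
    fun ⟨hT, hT'⟩ ↦ ?_⟩
  rw [ContinuousLinearMap.isUnit_iff_bijective,
    ContinuousLinearMap.bijective_iff_dense_range_and_antilipschitz]
  exact ⟨topologicalClosure_range_eq_top_of_injective_rightComp hT'.injective,
    hT.exists_antilipschitzWith⟩

lemma isUnit_rightComp_iff {T : E →L[𝕜] E} : IsUnit (rightComp 𝕜 T) ↔ IsUnit T :=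
  ⟨fun h ↦ isUnit_iff_boundedBelow_and_boundedBelow_rightComp.2
    ⟨boundedBelow_of_isUnit_rightComp h, boundedBelow_of_isUnit h⟩, isUnit_rightComp⟩

lemma isUnit_of_boundedBelow_or_of_mem_closure {T : E →L[𝕜] E}
    (hT : BoundedBelow T ∨ BoundedBelow (rightComp 𝕜 T))
    (hcl : T ∈ closure {S : E →L[𝕜] E | IsUnit S}) : IsUnit T :=
  hT.elim (·.isUnit_of_mem_closure hcl) fun hT' ↦
    isUnit_rightComp_iff.1 (hT'.isUnit_of_mem_closure (rightComp_mem_closure_isUnit hcl))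

variable [CompleteSpace F]

lemma isUnit_or_isUnit_of_isUnit_sylvester {A : E →L[𝕜] E} {B : F →L[𝕜] F}
    (h : IsUnit (sylvester A B))
    (hcl : A ∈ closure {T : E →L[𝕜] E | IsUnit T} ∨ B ∈ closure {T : F →L[𝕜] F | IsUnit T}) :
    IsUnit A ∨ IsUnit B := by
  have hAB' := boundedBelow_or_of_sylvester (boundedBelow_of_isUnit h)
  have hA'B := boundedBelow_or_of_rightComp_sylvester
    (boundedBelow_of_isUnit (isUnit_rightComp h))
  rcases hcl with hA | hB
  · by_cases hbelow : BoundedBelow A ∨ BoundedBelow (rightComp 𝕜 A)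
    · exact .inl (isUnit_of_boundedBelow_or_of_mem_closure hbelow hA)
    · rw [isUnit_iff_boundedBelow_and_boundedBelow_rightComp (T := B)]
      tauto
  · by_cases hbelow : BoundedBelow B ∨ BoundedBelow (rightComp 𝕜 B)
    · exact .inr (isUnit_of_boundedBelow_or_of_mem_closure hbelow hB)
    · rw [isUnit_iff_boundedBelow_and_boundedBelow_rightComp (T := A)]
      tauto

lemma disjoint_spectrum_of_isUnit_sylvester {A : E →L[𝕜] E} {B : F →L[𝕜] F}
    (h : IsUnit (sylvester A B)) : Disjoint (spectrum 𝕜 A) (spectrum 𝕜 B) := by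
  rw [disjoint_iff_inter_eq_empty]
  by_contra hne
  have hcompact : IsCompact (spectrum 𝕜 A ∩ spectrum 𝕜 B) :=
    (spectrum.isCompact A).inter_right (spectrum.isClosed B)
  obtain ⟨z, hz⟩ : (frontier (spectrum 𝕜 A ∩ spectrum 𝕜 B)).Nonempty :=
    nonempty_frontier_iff.2 ⟨nonempty_iff_ne_empty.2 hne, hcompact.ne_univ⟩
  have hzAB : z ∈ spectrum 𝕜 A ∩ spectrum 𝕜 B := hcompact.isClosed.frontier_subset hz
  have hcl := (frontier_inter_subset _ _ hz).imp
    (algebraMap_sub_mem_closure_isUnit_of_mem_frontier_spectrum ·.1)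
    (algebraMap_sub_mem_closure_isUnit_of_mem_frontier_spectrum ·.2)
  have hunit : IsUnit (sylvester (algebraMap 𝕜 _ z - A) (algebraMap 𝕜 _ z - B)) :=
    sylvester_algebraMap_sub A B z ▸ h.neg
  exact (isUnit_or_isUnit_of_isUnit_sylvester hunit hcl).elim hzAB.1 hzAB.2

end Duality

section Complex

variable {E F : Type*} [NormedAddCommGroup E] [NormedSpace ℂ E] [CompleteSpace E]
  [NormedAddCommGroup F] [NormedSpace ℂ F]

-- On `(F →L[ℂ] E) →L[ℂ] (F →L[ℂ] E)` itself, unifying the ring structure on operators with the one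
-- induced by the operator norm is prohibitively slow; for an opaque `E` it is immediate.
lemma spectrum_operator_sub_subset_of_commute {S T : E →L[ℂ] E} (hST : Commute S T) :
    spectrum ℂ (S - T) ⊆ spectrum ℂ S - spectrum ℂ T :=
  spectrum_sub_subset_of_commute hST

lemma spectrum_sylvester_subset (A : E →L[ℂ] E) (B : F →L[ℂ] F) :
    spectrum ℂ (sylvester A B) ⊆ spectrum ℂ A - spectrum ℂ B :=
  calc spectrum ℂ (sylvester A B)
      ⊆ spectrum ℂ (leftComp F A) - spectrum ℂ (rightComp E B) :=
        spectrum_operator_sub_subset_of_commute (commute_leftComp_rightComp A B)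
    _ ⊆ spectrum ℂ A - spectrum ℂ B :=
        sub_subset_sub (spectrum_leftComp_subset A) (spectrum_rightComp_subset B)

lemma isUnit_sylvester_iff [CompleteSpace F] {A : E →L[ℂ] E} {B : F →L[ℂ] F} :
    IsUnit (sylvester A B) ↔ Disjoint (spectrum ℂ A) (spectrum ℂ B) := by
  refine ⟨disjoint_spectrum_of_isUnit_sylvester, fun h ↦ ?_⟩
  rw [← spectrum.zero_notMem_iff ℂ]
  intro hzero
  obtain ⟨z, hzA, w, hwB, hzw⟩ := mem_sub.1 (spectrum_sylvester_subset A B hzero)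
  exact disjoint_left.1 h hzA (sub_eq_zero.1 hzw ▸ hwB)

theorem stmt_3_general [CompleteSpace F] (A : E →L[ℂ] E) (B : F →L[ℂ] F) :
    (∀ C : F →L[ℂ] E, ∃! X : F →L[ℂ] E, A.comp X + X.comp B + C = 0) ↔
      spectrum ℂ A ∩ spectrum ℂ (-B) = ∅ := by
  rw [forall_existsUnique_comp_add_iff_bijective_sylvester,
    ← ContinuousLinearMap.isUnit_iff_bijective, isUnit_sylvester_iff,
    disjoint_iff_inter_eq_empty]

end Complex

/-- Sylvester–Rosenblum theorem: for bounded operators `A, B` on a complex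
Banach space, the Sylvester equation `A∘X + X∘B + C = 0` has a unique bounded
solution `X` for every bounded `C` if and only if `σ(A) ∩ σ(-B) = ∅`. -/
theorem stmt_3 {E : Type*} [NormedAddCommGroup E] [NormedSpace ℂ E] [CompleteSpace E]
    (A B : E →L[ℂ] E) :
    (∀ C : E →L[ℂ] E, ∃! X : E →L[ℂ] E, A.comp X + X.comp B + C = 0) ↔
      spectrum ℂ A ∩ spectrum ℂ (-B) = ∅ :=
  stmt_3_general A B
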